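/- If an idempotent magma M satisfies the identity (x*y)*(u*v) = x * s(y,v) for all x,y,u,v in M, for some binary term s, then M is medial. -/

import Mathlib

/-- Evaluation of a binary term (an element of the free magma on two
generators) in a magma `M` under the assignment `0 ↦ a`, `1 ↦ b`. -/
def evalBin {M : Type*} [Mul M] (t : FreeMagma (Fin 2)) (a b : M) : M :=
  FreeMagma.lift ![a, b] t

/-!
The identity shows that `(x * y) * (u * v)` does not depend on `u`. If every element is a product,
then `z * (u * v)` does not depend on `u`, so `z * t(a, b)` depends only on the value of the
rightmost variable of `t`. If `s` ends in its second variable, then `(x * y) * (u * v)`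
depends on `x` and `v` only. If `s` ends in its first variable, then `(x * y) * (u * v)` does not
depend on `v` either, so left multiplications are constant. Both kinds of magma are medial.
-/

/-- The generator at the right end of an element of a free magma, read as a bracketed word: the
only one whose value matters on the right of a product when `z * (u * v)` does not depend on `u`. -/
def rightmostLeaf {α : Type*} : FreeMagma α → α
  | .of i => i
  | .mul _ q => rightmostLeaf q

theorem mul_lift_eq_mul_lift_of_rightmostLeaf {α M : Type*} [Mul M]
    (hmul : ∀ z u u' v : M, z * (u * v) = z * (u' * v)) {f g : α → M} (t : FreeMagma α)
    (hfg : f (rightmostLeaf t) = g (rightmostLeaf t)) (z : M) :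
    z * FreeMagma.lift f t = z * FreeMagma.lift g t := by
  induction t using FreeMagma.recOnMul generalizing z with
  | ih1 i => exact congrArg (z * ·) hfg
  | ih2 p q _ ihq =>
    calc z * FreeMagma.lift f (p * q)
        = z * (FreeMagma.lift f p * FreeMagma.lift f q) := by rw [map_mul]
      _ = z * (FreeMagma.lift f p * FreeMagma.lift g q) := by rw [ihq hfg]
      _ = z * (FreeMagma.lift g p * FreeMagma.lift g q) := hmul ..
      _ = z * FreeMagma.lift g (p * q) := by rw [map_mul]

theorem medial_of_mul_right_irrel {M : Type*} [Mul M] (hconst : ∀ x w w' : M, x * w = x * w')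
    (x y u v : M) : (x * y) * (u * v) = (x * u) * (y * v) := by
  rw [hconst x y u, hconst (x * u)]

theorem stmt_1_general {M : Type*} [Mul M] (hsurj : ∀ z : M, ∃ x y : M, x * y = z)
    (s : FreeMagma (Fin 2))
    (h : ∀ x y u v : M, (x * y) * (u * v) = x * evalBin s y v) (x y u v : M) :
    (x * y) * (u * v) = (x * u) * (y * v) := by
  have hmul (z a a' b : M) : z * (a * b) = z * (a' * b) := by
    obtain ⟨c, d, rfl⟩ := hsurj z
    rw [h, h]
  obtain hs | hs : rightmostLeaf s = 0 ∨ rightmostLeaf s = 1 := by lia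
  · have hfirst (z a b b' : M) : z * evalBin s a b = z * evalBin s a b' :=
      mul_lift_eq_mul_lift_of_rightmostLeaf hmul s (by simp [hs]) z
    refine medial_of_mul_right_irrel (fun z w w' => ?_) x y u v
    obtain ⟨a, b, rfl⟩ := hsurj z
    obtain ⟨c, d, rfl⟩ := hsurj w
    obtain ⟨c', d', rfl⟩ := hsurj w'
    rw [h, h, hfirst]
  · have hsecond (z a a' b : M) : z * evalBin s a b = z * evalBin s a' b :=
      mul_lift_eq_mul_lift_of_rightmostLeaf hmul s (by simp [hs]) z
    rw [h, h, hsecond]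

/-- An idempotent magma satisfying this instance of the generalized entropic
property is medial. -/
theorem stmt_1 {M : Type*} [Mul M] (hidem : ∀ x : M, x * x = x)
    (s : FreeMagma (Fin 2))
    (h : ∀ x y u v : M, (x * y) * (u * v) = x * evalBin s y v) :
    ∀ x y u v : M, (x * y) * (u * v) = (x * u) * (y * v) :=
  stmt_1_general (fun z => ⟨z, z, hidem z⟩) s h
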